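/- (Schaefer fixed point theorem) Let X be a Banach space and M : X → X a continuous compact map. If the set {x ∈ X : x = t·M(x) for some t ∈ (0,1)} is bounded, then M has a fixed point. -/

import Mathlib

open MeasureTheory Metric Set

section Brouwer

lemma det_one_add_interp {E : Type*} [NormedAddCommGroup E] [NormedSpace ℝ E]
    [FiniteDimensional ℝ E] (v : Fin (Module.finrank ℝ E + 1) → ℝ)
    (hv : Function.Injective v) (A : E →L[ℝ] E) :
    (1 + A).det = ∑ j, (Lagrange.basis Finset.univ v j).eval 1 * (1 + v j • A).det := by
  classical
  let b := Module.finBasis ℝ E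
  let B := LinearMap.toMatrix b b (A : E →ₗ[ℝ] E)
  let p : Polynomial ℝ := Matrix.det ((Polynomial.X : Polynomial ℝ) • B.map Polynomial.C
    + (1 : Matrix _ _ ℝ).map Polynomial.C)
  have hp : ∀ t : ℝ, p.eval t = (1 + t • A).det := by
    intro t
    have h1 : (1 + t • A).det = (LinearMap.toMatrix b b ((1 + t • A : E →L[ℝ] E) : E →ₗ[ℝ] E)).det := by
      rw [LinearMap.det_toMatrix]
    rw [h1]
    have h2 : LinearMap.toMatrix b b ((1 + t • A : E →L[ℝ] E) : E →ₗ[ℝ] E) = t • B + 1 := by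
      have : ((1 + t • A : E →L[ℝ] E) : E →ₗ[ℝ] E) = LinearMap.id + t • (A : E →ₗ[ℝ] E) := by
        ext; simp
      rw [this, map_add, map_smul, LinearMap.toMatrix_id, add_comm]
    rw [h2]
    simp only [p, ← Polynomial.coe_evalRingHom, RingHom.map_det]
    congr 1
    ext i j
    simp [Matrix.map_apply]
    rw [mul_comm, Matrix.one_apply, Matrix.one_apply]
    split_ifs <;> simp
  have hdeg : p.degree < (Finset.univ : Finset (Fin (Module.finrank ℝ E + 1))).card := by
    have := Polynomial.natDegree_det_X_add_C_le B 1
    simp only [Fintype.card_fin] at this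
    refine lt_of_le_of_lt Polynomial.degree_le_natDegree ?_
    simp only [Finset.card_univ, Fintype.card_fin]
    exact_mod_cast Nat.lt_succ_of_le this
  have := Lagrange.eq_interpolate (s := Finset.univ) hv.injOn hdeg
  have h3 := congrArg (Polynomial.eval 1) this
  rw [hp, Lagrange.interpolate_apply, Polynomial.eval_finsetSum] at h3
  simp only [one_smul, Polynomial.eval_mul, Polynomial.eval_C, hp] at h3
  rw [h3]
  exact Finset.sum_congr rfl fun _ _ => mul_comm _ _

lemma det_one_add_pos {E : Type*} [NormedAddCommGroup E] [NormedSpace ℝ E]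
    [FiniteDimensional ℝ E] (A : E →L[ℝ] E) (hA : ‖A‖ < 1) : 0 < (1 + A).det := by
  have hne : ∀ s ∈ Icc (0:ℝ) 1, (1 + s • A).det ≠ 0 := by
    intro s hs h0
    have hn : ‖s • A‖ < 1 := by
      rw [norm_smul, Real.norm_of_nonneg hs.1]
      nlinarith [norm_nonneg A, hs.2, hs.1]
    have hk := LinearMap.bot_lt_ker_of_det_eq_zero (f := ((1 + s • A : E →L[ℝ] E) : E →ₗ[ℝ] E)) h0
    obtain ⟨v, hv, hv0⟩ := (Submodule.ne_bot_iff _).mp hk.ne'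
    have hv1 : v + (s • A) v = 0 := by simpa using hv
    have hv2 : ‖v‖ ≤ ‖s • A‖ * ‖v‖ := by
      conv_lhs => rw [eq_neg_of_add_eq_zero_left hv1, norm_neg]
      exact (s • A).le_opNorm v
    have : 0 < ‖v‖ := norm_pos_iff.mpr hv0
    nlinarith
  by_contra hcon
  push Not at hcon
  have hc : ContinuousOn (fun s : ℝ => (1 + s • A).det) (Icc 0 1) :=
    (ContinuousLinearMap.continuous_det.comp (by fun_prop : Continuous fun s : ℝ => 1 + s • A)).continuousOn
  have := intermediate_value_Icc' zero_le_one hc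
  have h0 : (0:ℝ) ∈ Icc ((1 + (1:ℝ) • A).det) ((1 + (0:ℝ) • A).det) := by
    refine ⟨by simpa using hcon, ?_⟩
    simp [ContinuousLinearMap.det]
  obtain ⟨s, hs, h⟩ := this h0
  exact hne s hs h

lemma zero_ext_lipschitz {E : Type*} [NormedAddCommGroup E] [NormedSpace ℝ E]
    (h : E → E) (K : NNReal) (hL : LipschitzOnWith K h (closedBall 0 1))
    (h0 : ∀ x, ‖x‖ = 1 → h x = 0) :
    LipschitzWith K (fun x => open Classical in if ‖x‖ ≤ 1 then h x else 0) := by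
  have key : ∀ x z : E, ‖x‖ ≤ 1 → ¬ ‖z‖ ≤ 1 → ‖h x‖ ≤ K * ‖x - z‖ := by
    intro x z hx hz
    have hc : ContinuousOn (fun s : ℝ => ‖x + s • (z - x)‖) (Icc 0 1) := by fun_prop
    have h1 : (1:ℝ) ∈ Icc (‖x + (0:ℝ) • (z - x)‖) (‖x + (1:ℝ) • (z - x)‖) := by
      refine ⟨by simpa using hx, by simpa using (not_le.mp hz).le⟩
    obtain ⟨s, hs, hw⟩ := intermediate_value_Icc zero_le_one hc h1
    have := hL.dist_le_mul x (by simpa using hx) (x + s • (z - x)) (by simpa using hw.le)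
    rw [h0 _ hw, dist_zero_right, dist_eq_norm] at this
    refine this.trans ?_
    gcongr
    have e : x - (x + s • (z - x)) = s • (x - z) := by
      rw [smul_sub, smul_sub]; abel
    rw [e, norm_smul, Real.norm_of_nonneg hs.1]
    nlinarith [norm_nonneg (x - z), hs.2]
  refine LipschitzWith.of_dist_le_mul fun x y => ?_
  by_cases hx : ‖x‖ ≤ 1 <;> by_cases hy : ‖y‖ ≤ 1
  · simp only [hx, hy, if_true]
    exact hL.dist_le_mul x (by simpa using hx) y (by simpa using hy)
  · simp only [hx, hy, if_true, if_false, dist_zero_right, dist_eq_norm x y]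
    exact key x y hx hy
  · simp only [hx, hy, if_true, if_false, dist_zero_left, dist_comm x y, dist_eq_norm y x]
    exact key y x hy hx
  · simp [hx, hy]
    positivity

lemma perturb_image {E : Type*} [NormedAddCommGroup E] [NormedSpace ℝ E] [CompleteSpace E]
    (h : E → E) (K : NNReal) (hL : LipschitzOnWith K h (closedBall 0 1))
    (h0 : ∀ x, ‖x‖ = 1 → h x = 0) (t : ℝ) (ht : 0 ≤ t) (htK : t * K < 1) :
    InjOn (fun x => x + t • h x) (ball 0 1) ∧
      (fun x => x + t • h x) '' (ball 0 1) = ball 0 1 := by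
  classical
  have hg := zero_ext_lipschitz h K hL h0
  set g : E → E := (fun x => open Classical in if ‖x‖ ≤ 1 then h x else 0) with hgdef
  have gin : ∀ x, ‖x‖ ≤ 1 → g x = h x := fun x hx => by simp [hgdef, hx]
  have gout : ∀ x, 1 ≤ ‖x‖ → g x = 0 := fun x hx => by
    by_cases hx1 : ‖x‖ ≤ 1
    · rw [gin x hx1, h0 x (le_antisymm hx1 hx)]
    · simp [hgdef, hx1]
  have ginj : ∀ x y, x + t • g x = y + t • g y → x = y := by
    intro x y hxy
    have e : x - y = t • (g y - g x) := by
      rw [smul_sub]; rw [← sub_eq_zero] at hxy ⊢; rw [← hxy]; abel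
    have h1 : ‖x - y‖ ≤ t * K * ‖x - y‖ := by
      conv_lhs => rw [e]
      rw [norm_smul, Real.norm_of_nonneg ht, mul_assoc, norm_sub_rev x y]
      gcongr
      have := hg.dist_le_mul y x
      rwa [dist_eq_norm, dist_eq_norm] at this
    have h2 : ‖x - y‖ = 0 := by nlinarith [norm_nonneg (x - y)]
    exact sub_eq_zero.mp (norm_eq_zero.mp h2)
  have gsurj : ∀ y, ∃ x, x + t • g x = y := by
    intro y
    have hct : ContractingWith (t.toNNReal * K) (fun x => y - t • g x) := by
      refine ⟨?_, ?_⟩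
      · rw [← NNReal.coe_lt_coe]; simpa [Real.coe_toNNReal t ht] using htK
      · refine LipschitzWith.of_dist_le_mul fun x z => ?_
        have := hg.dist_le_mul x z
        rw [dist_sub_left, dist_smul₀, Real.norm_of_nonneg ht, NNReal.coe_mul,
          Real.coe_toNNReal t ht, mul_assoc]
        gcongr
    have := hct.fixedPoint_isFixedPt
    refine ⟨ContractingWith.fixedPoint _ hct, ?_⟩
    rw [← eq_sub_iff_add_eq]; exact this.symm
  have hball : ∀ x, ‖x‖ < 1 → ‖x + t • g x‖ < 1 := by
    intro x hx
    by_contra hcon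
    push Not at hcon
    have : x + t • g x + t • g (x + t • g x) = x + t • g x := by
      rw [gout _ hcon]; simp
    have := ginj _ _ this
    rw [this] at hcon
    linarith
  constructor
  · intro x hx y hy hxy
    simp only [mem_ball_zero_iff] at hx hy
    apply ginj
    rw [gin x hx.le, gin y hy.le]; exact hxy
  · ext y
    simp only [mem_image, mem_ball_zero_iff]
    constructor
    · rintro ⟨x, hx, rfl⟩
      rw [← gin x hx.le]; exact hball x hx
    · intro hy
      obtain ⟨x, hx⟩ := gsurj y
      have hx1 : ‖x‖ < 1 := by
        by_contra hcon
        push Not at hcon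
        rw [gout x hcon] at hx
        simp at hx
        rw [hx] at hcon
        linarith
      exact ⟨x, hx1, by rw [← gin x hx1.le]; exact hx⟩


lemma milnor {E : Type*} [NormedAddCommGroup E] [NormedSpace ℝ E] [FiniteDimensional ℝ E]
    [MeasurableSpace E] [BorelSpace E] (μ : Measure E) [μ.IsAddHaarMeasure]
    (h : E → E) (hs : ∀ x ∈ closedBall (0:E) 1, ContDiffAt ℝ 1 h x)
    (h0 : ∀ x, ‖x‖ = 1 → h x = 0) :
    ∫ x in ball (0:E) 1, (1 + fderiv ℝ h x).det ∂μ = μ.real (ball 0 1) := by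
  have hcont : ContinuousOn (fderiv ℝ h) (closedBall 0 1) := fun x hx =>
    ((hs x hx).continuousAt_fderiv one_ne_zero).continuousWithinAt
  have hdiff : ∀ x ∈ closedBall (0:E) 1, DifferentiableAt ℝ h x := fun x hx =>
    (hs x hx).differentiableAt one_ne_zero
  have hcpt : IsCompact (closedBall (0:E) 1) := isCompact_closedBall 0 1
  obtain ⟨C, hC⟩ := hcpt.exists_bound_of_continuousOn hcont
  let K : NNReal := C.toNNReal + 1
  have hK : ∀ x ∈ closedBall (0:E) 1, ‖fderiv ℝ h x‖ ≤ K := fun x hx => by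
    have := hC x hx
    have h2 := Real.le_coe_toNNReal C
    simp only [K, NNReal.coe_add, NNReal.coe_one]
    linarith
  have hKpos : (0:ℝ) < K := by simp only [K, NNReal.coe_add, NNReal.coe_one]; positivity
  have hL : LipschitzOnWith K h (closedBall 0 1) :=
    (convex_closedBall 0 1).lipschitzOnWith_of_nnnorm_fderiv_le hdiff
      (fun x hx => by exact_mod_cast hK x hx)
  have small : ∀ t : ℝ, 0 ≤ t → t * K < 1 →
      ∫ x in ball (0:E) 1, (1 + t • fderiv ℝ h x).det ∂μ = μ.real (ball 0 1) := by
    intro t ht htK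
    obtain ⟨hinj, himg⟩ := perturb_image h K hL h0 t ht htK
    have hder : ∀ x ∈ ball (0:E) 1, HasFDerivWithinAt (fun x => x + t • h x)
        (1 + t • fderiv ℝ h x) (ball 0 1) x := fun x hx =>
      ((hasFDerivAt_id x).add
        ((hdiff x (ball_subset_closedBall hx)).hasFDerivAt.const_smul t)).hasFDerivWithinAt
    have := integral_image_eq_integral_abs_det_fderiv_smul μ measurableSet_ball hder hinj
      (fun _ => (1:ℝ))
    rw [himg] at this
    simp only [integral_const, smul_eq_mul, mul_one, MeasurableSet.univ, measureReal_restrict_apply, univ_inter] at this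
    rw [this]
    refine setIntegral_congr_fun measurableSet_ball fun x hx => ?_
    refine (abs_of_pos (det_one_add_pos _ ?_)).symm
    rw [norm_smul, Real.norm_of_nonneg ht]
    refine lt_of_le_of_lt ?_ htK
    gcongr
    exact hK x (ball_subset_closedBall hx)
  set n := Module.finrank ℝ E with hn
  let v : Fin (n + 1) → ℝ := fun j => 1 / ((K:ℝ) * (j + 2))
  have hv : Function.Injective v := by
    intro i j hij
    simp only [v, one_div, inv_inj] at hij
    have := mul_left_cancel₀ hKpos.ne' hij
    have : (i:ℝ) = j := by linarith
    exact Fin.ext (by exact_mod_cast this)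
  have hv0 : ∀ j, 0 ≤ v j := fun j => by positivity
  have hv1 : ∀ j, v j * K < 1 := fun j => by
    have : v j * K = 1 / ((j:ℝ) + 2) := by simp only [v]; field_simp
    rw [this, div_lt_one (by positivity)]
    have : (0:ℝ) ≤ j := by positivity
    linarith
  have hsum : ∑ j, (Lagrange.basis Finset.univ v j).eval 1 = 1 := by
    have := det_one_add_interp v hv (0 : E →L[ℝ] E)
    simpa [ContinuousLinearMap.det] using this.symm
  have hint : ∀ t : ℝ, IntegrableOn (fun x => (1 + t • fderiv ℝ h x).det) (ball 0 1) μ := fun t => by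
    refine (ContinuousOn.integrableOn_compact hcpt ?_).mono_set ball_subset_closedBall
    exact ContinuousLinearMap.continuous_det.comp_continuousOn
      (continuousOn_const.add (hcont.const_smul t))
  calc ∫ x in ball (0:E) 1, (1 + fderiv ℝ h x).det ∂μ
      = ∫ x in ball (0:E) 1, ∑ j, (Lagrange.basis Finset.univ v j).eval 1 *
          (1 + v j • fderiv ℝ h x).det ∂μ := by
        congr 1; ext x; exact det_one_add_interp v hv _
    _ = ∑ j, (Lagrange.basis Finset.univ v j).eval 1 * μ.real (ball (0:E) 1) := by
        rw [integral_finsetSum _ fun j _ => (hint (v j)).const_mul _]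
        refine Finset.sum_congr rfl fun j _ => ?_
        rw [integral_const_mul, small _ (hv0 j) (hv1 j)]
    _ = μ.real (ball 0 1) := by rw [← Finset.sum_mul, hsum, one_mul]

lemma no_retraction {E : Type*} [NormedAddCommGroup E] [InnerProductSpace ℝ E]
    [FiniteDimensional ℝ E]
    (h : E → E) (hs : ∀ x ∈ closedBall (0:E) 1, ContDiffAt ℝ 1 h x)
    (h0 : ∀ x, ‖x‖ = 1 → h x = 0)
    (h1 : ∀ x, ‖x‖ ≤ 1 → ‖x + h x‖ = 1) : False := by
  borelize E
  have hm := milnor (Measure.addHaar : Measure E) h hs h0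
  have hz : ∀ x ∈ ball (0:E) 1, (1 + fderiv ℝ h x).det = 0 := by
    intro x hx
    have hd : HasFDerivAt (fun x => x + h x) (1 + fderiv ℝ h x) x :=
      (hasFDerivAt_id x).add
        ((hs x (ball_subset_closedBall hx)).differentiableAt one_ne_zero).hasFDerivAt
    have hd2 := hd.norm_sq
    have hd3 : HasFDerivAt (fun x => ‖x + h x‖ ^ 2) (0 : E →L[ℝ] ℝ) x := by
      refine (hasFDerivAt_const (1:ℝ) x).congr_of_eventuallyEq ?_
      filter_upwards [isOpen_ball.mem_nhds hx] with y hy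
      rw [h1 y ((mem_ball_zero_iff.mp hy).le)]; norm_num
    have heq := hd2.unique hd3
    by_contra hne
    have hu : IsUnit ((1 + fderiv ℝ h x : E →L[ℝ] E) : E →ₗ[ℝ] E) := by
      rw [LinearMap.isUnit_iff_isUnit_det]
      exact isUnit_iff_ne_zero.mpr hne
    have hsurj : Function.Surjective ((1 + fderiv ℝ h x : E →L[ℝ] E) : E →ₗ[ℝ] E) :=
      ((Module.End.isUnit_iff _).mp hu).2
    obtain ⟨w, hw⟩ := hsurj (x + h x)
    have := congrArg (fun L : E →L[ℝ] ℝ => L w) heq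
    have hw' : (1 + fderiv ℝ h x : E →L[ℝ] E) w = x + h x := hw
    simp only [smul_apply, ContinuousLinearMap.comp_apply, hw',
      innerSL_apply_apply, real_inner_self_eq_norm_sq] at this
    rw [h1 x ((mem_ball_zero_iff.mp hx).le)] at this
    norm_num at this
  rw [setIntegral_congr_fun measurableSet_ball hz] at hm
  simp only [integral_zero] at hm
  have := measure_ball_pos (Measure.addHaar : Measure E) 0 one_pos
  have h2 : (Measure.addHaar : Measure E) (ball 0 1) ≠ ⊤ := measure_ball_lt_top.ne
  have := ENNReal.toReal_pos this.ne' h2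
  rw [measureReal_def] at hm
  linarith

lemma brouwer_smooth {E : Type*} [NormedAddCommGroup E] [InnerProductSpace ℝ E]
    [FiniteDimensional ℝ E] (p : E → E) (hp : ContDiff ℝ 1 p)
    (hp1 : ∀ x, ‖x‖ ≤ 1 → ‖p x‖ ≤ 1) : ∃ x, ‖x‖ ≤ 1 ∧ p x = x := by
  by_contra hcon
  push Not at hcon
  let u : E → E := fun x => x - p x
  let a : E → ℝ := fun x => ‖u x‖ ^ 2
  let b : E → ℝ := fun x => inner ℝ x (u x)
  let d : E → ℝ := fun x => b x ^ 2 + a x * (1 - ‖x‖ ^ 2)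
  let l : E → ℝ := fun x => (-b x + Real.sqrt (d x)) / a x
  have hu : ContDiff ℝ 1 u := contDiff_id.sub hp
  have ha : ContDiff ℝ 1 a := hu.norm_sq ℝ
  have hb : ContDiff ℝ 1 b := contDiff_id.inner ℝ hu
  have hd : ContDiff ℝ 1 d := (hb.pow 2).add (ha.mul (contDiff_const.sub (contDiff_id.norm_sq ℝ)))
  have ha0 : ∀ x, ‖x‖ ≤ 1 → 0 < a x := fun x hx => by
    have : u x ≠ 0 := sub_ne_zero.mpr (hcon x hx).symm
    have := norm_pos_iff.mpr this
    simp only [a]; positivity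
  have hab : ∀ x, a x - 2 * b x = ‖p x‖ ^ 2 - ‖x‖ ^ 2 := fun x => by
    simp only [a, b, u, ← real_inner_self_eq_norm_sq, inner_sub_left, inner_sub_right,
      real_inner_comm x (p x)]
    ring
  have hb1 : ∀ x, ‖x‖ = 1 → 0 < b x := fun x hx => by
    have h1 := hab x
    have h2 := ha0 x hx.le
    have h3 := hp1 x hx.le
    rw [hx] at h1
    nlinarith [norm_nonneg (p x)]
  have hd0 : ∀ x, ‖x‖ ≤ 1 → 0 < d x := fun x hx => by
    rcases hx.lt_or_eq with hx1 | hx1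
    · have : 0 < 1 - ‖x‖ ^ 2 := by nlinarith [norm_nonneg x]
      have := mul_pos (ha0 x hx) this
      simp only [d]; positivity
    · have := hb1 x hx1
      simp only [d, hx1]; norm_num; positivity
  refine no_retraction (fun x => l x • u x) ?_ ?_ ?_
  · intro x hx
    have hx : ‖x‖ ≤ 1 := by simpa using hx
    exact ((hb.contDiffAt.neg.add (hd.contDiffAt.sqrt (hd0 x hx).ne')).div ha.contDiffAt
      (ha0 x hx).ne').smul hu.contDiffAt
  · intro x hx
    have : l x = 0 := by
      simp only [l, d, hx]
      norm_num [Real.sqrt_sq (hb1 x hx).le]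
    simp [this]
  · intro x hx
    have hsq := Real.sq_sqrt (hd0 x hx).le
    have hla : l x * a x = -b x + Real.sqrt (d x) := div_mul_cancel₀ _ (ha0 x hx).ne'
    have e : ‖x + l x • u x‖ ^ 2 = ‖x‖ ^ 2 + 2 * (l x * b x) + l x ^ 2 * a x := by
      rw [norm_add_sq_real, inner_smul_right, norm_smul, mul_pow, Real.norm_eq_abs, sq_abs]
    have e2 : a x * (‖x + l x • u x‖ ^ 2 - 1) = 0 := by
      rw [e]
      have h3 : (l x * a x + b x) ^ 2 = b x ^ 2 + a x * (1 - ‖x‖ ^ 2) := by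
        rw [hla]; linear_combination hsq
      linear_combination h3
    have e3 : ‖x + l x • u x‖ ^ 2 = 1 := by
      rcases mul_eq_zero.mp e2 with h | h
      · exact absurd h (ha0 x hx).ne'
      · linarith
    nlinarith [norm_nonneg (x + l x • u x)]

lemma brouwer_unit {E : Type*} [NormedAddCommGroup E] [InnerProductSpace ℝ E]
    [FiniteDimensional ℝ E] (f : E → E) (hf : Continuous f)
    (hf1 : ∀ x, ‖f x‖ ≤ 1) : ∃ x, f x = x := by
  by_contra hcon
  push Not at hcon
  have hcpt : IsCompact (closedBall (0:E) 1) := isCompact_closedBall 0 1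
  obtain ⟨x0, hx0, hmin⟩ := hcpt.exists_isMinOn ⟨0, by simp⟩
    (f := fun x => ‖f x - x‖) (by fun_prop)
  set δ := ‖f x0 - x0‖ with hδ
  have hδ0 : 0 < δ := norm_pos_iff.mpr (sub_ne_zero.mpr (hcon x0))
  have hdense := ContinuousMap.dense_setOfPred_contDiff (E := E) (F := E) ⟨f, hf⟩
  rw [mem_closure_iff_nhds_basis
    (nhds_basis_uniformity Metric.uniformity_basis_dist.compactConvergenceUniformity)] at hdense
  obtain ⟨g, hg, hgf⟩ := hdense (closedBall 0 1, δ / 2) ⟨hcpt, by positivity⟩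
  have hgf' : ∀ x, ‖x‖ ≤ 1 → ‖g x - f x‖ < δ / 2 := fun x hx => by
    have := hgf x (by simpa using hx)
    rw [← dist_eq_norm]
    simpa [dist_comm] using this
  have hg' : ContDiff ℝ (((⊤ : ℕ∞) : WithTop ℕ∞)) g := hg
  set q : E → E := fun x => (1 + δ / 2)⁻¹ • g x with hq
  have hqs : ContDiff ℝ 1 q := contDiff_const.smul (hg'.of_le (by exact_mod_cast le_top))
  have hgn : ∀ x, ‖x‖ ≤ 1 → ‖g x‖ ≤ 1 + δ / 2 := fun x hx => by
    have h1 := hgf' x hx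
    have h2 := hf1 x
    have h3 : ‖g x‖ ≤ ‖f x‖ + ‖g x - f x‖ := by
      simpa using norm_add_le (f x) (g x - f x)
    linarith
  obtain ⟨x, hx, hxq⟩ := brouwer_smooth q hqs (fun x hx => by
    simp only [hq, norm_smul, norm_inv, Real.norm_of_nonneg (by positivity : 0 ≤ 1 + δ / 2)]
    rw [inv_mul_le_iff₀ (by positivity)]
    linarith [hgn x hx])
  have hgx : g x = (1 + δ / 2) • x := by
    conv_rhs => rw [← hxq]
    simp only [hq]
    rw [smul_inv_smul₀ (by positivity)]
  have h4 : ‖g x - x‖ ≤ δ / 2 := by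
    rw [hgx, add_smul, one_smul, add_sub_cancel_left, norm_smul,
      Real.norm_of_nonneg (by positivity)]
    nlinarith
  have h5 : δ ≤ ‖f x - x‖ := hmin (by simpa using hx)
  have h6 : ‖f x - x‖ ≤ ‖g x - x‖ + ‖g x - f x‖ := by
    have := norm_sub_le (g x - x) (g x - f x)
    simpa using this
  linarith [hgf' x hx]

lemma brouwer {E : Type*} [NormedAddCommGroup E] [InnerProductSpace ℝ E]
    [FiniteDimensional ℝ E] (f : E → E) (hf : Continuous f) (R : ℝ) (hR : 0 < R)
    (hf1 : ∀ x, ‖f x‖ ≤ R) : ∃ x, f x = x := by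
  obtain ⟨x, hx⟩ := brouwer_unit (fun x => R⁻¹ • f (R • x)) (by fun_prop) (fun x => by
    rw [norm_smul, norm_inv, Real.norm_of_nonneg hR.le, inv_mul_le_iff₀ hR, mul_one]
    exact hf1 _)
  refine ⟨R • x, ?_⟩
  conv_rhs => rw [← hx]
  rw [smul_inv_smul₀ hR.ne']

end Brouwer

section Schauder

lemma schauder {X : Type*} [NormedAddCommGroup X] [NormedSpace ℝ X]
    (N : X → X) (hN : Continuous N) (K : Set X) (hK : IsCompact K) (hNK : ∀ x, N x ∈ K) :
    ∃ x, N x = x := by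
  have approx : ∀ ε : ℝ, 0 < ε → ∃ x, ‖N x - x‖ ≤ ε := by
    intro ε hε
    obtain ⟨T, -, hTf, hT⟩ := hK.finite_cover_balls hε
    have := hTf.fintype
    let w : T → X → ℝ := fun i y => max 0 (ε - ‖y - i‖)
    let S : X → ℝ := fun y => ∑ i, w i y
    have hw0 : ∀ i y, 0 ≤ w i y := fun i y => le_max_left _ _
    have hwc : ∀ i, Continuous (w i) := fun i => by fun_prop
    have hSc : Continuous S := by fun_prop
    have hS : ∀ y ∈ K, 0 < S y := fun y hy => by
      obtain ⟨i, hi, hyi⟩ := mem_iUnion₂.mp (hT hy)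
      refine Finset.sum_pos' (fun i _ => hw0 i y) ⟨⟨i, hi⟩, Finset.mem_univ _, ?_⟩
      rw [mem_ball, dist_eq_norm] at hyi
      exact lt_max_of_lt_right (by simpa using hyi)
    let c : EuclideanSpace ℝ T → X := fun z => ∑ i, z i • (i : X)
    have hc : Continuous c := by fun_prop
    let f : EuclideanSpace ℝ T → EuclideanSpace ℝ T :=
      fun z => WithLp.toLp 2 (fun i => w i (N (c z)) / S (N (c z)))
    have hf : Continuous f := by
      refine (PiLp.continuous_toLp 2 _).comp (continuous_pi fun i => ?_)
      exact ((hwc i).comp (hN.comp hc)).div (hSc.comp (hN.comp hc))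
        (fun z => (hS _ (hNK _)).ne')
    have hfb : ∀ z, ‖f z‖ ≤ Fintype.card T + 1 := fun z => by
      have hSp := hS _ (hNK (c z))
      have h1 : ∀ i, ‖f z i‖ ^ 2 ≤ 1 := fun i => by
        have h0 : 0 ≤ f z i := div_nonneg (hw0 i _) hSp.le
        have h1 : f z i ≤ 1 := by
          refine (div_le_one hSp).mpr ?_
          exact Finset.single_le_sum (f := fun i => w i (N (c z)))
            (fun j _ => hw0 j _) (Finset.mem_univ i)
        rw [Real.norm_of_nonneg h0]; nlinarith
      have h2 : ‖f z‖ ^ 2 ≤ Fintype.card T := by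
        rw [EuclideanSpace.norm_sq_eq]
        refine (Finset.sum_le_sum fun i _ => h1 i).trans ?_
        simp
      nlinarith [norm_nonneg (f z)]
    obtain ⟨z, hz⟩ := brouwer f hf _ (by positivity) hfb
    refine ⟨c z, ?_⟩
    set y := N (c z) with hy
    have hSp := hS y (hNK _)
    have hzi : ∀ i, z i = w i y / S y := fun i => by
      conv_lhs => rw [← hz]
    have hsum : ∑ i, z i = 1 := by
      simp only [hzi, ← Finset.sum_div]
      exact div_self hSp.ne'
    have e : y - c z = ∑ i, z i • (y - (i : X)) := by
      simp only [smul_sub, Finset.sum_sub_distrib, ← Finset.sum_smul, hsum, one_smul, c]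
    rw [e]
    calc ‖∑ i, z i • (y - (i : X))‖ ≤ ∑ i, ‖z i • (y - (i : X))‖ := norm_sum_le _ _
      _ ≤ ∑ i, z i * ε := by
        refine Finset.sum_le_sum fun i _ => ?_
        have hz0 : 0 ≤ z i := by rw [hzi]; exact div_nonneg (hw0 i y) hSp.le
        rw [norm_smul, Real.norm_of_nonneg hz0]
        rcases le_or_gt ‖y - i‖ ε with h | h
        · gcongr
        · have : z i = 0 := by
            rw [hzi]
            have : w i y = 0 := max_eq_left (by linarith)
            rw [this, zero_div]
          simp [this]
      _ = ε := by rw [← Finset.sum_mul, hsum, one_mul]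
  choose x hx using fun n : ℕ => approx (1 / ((n:ℝ) + 1)) (by positivity)
  obtain ⟨y, -, φ, hφ, hlim⟩ := hK.tendsto_subseq (fun n => hNK (x n))
  have hdiff : Filter.Tendsto (fun n => N (x n) - x n) Filter.atTop (nhds 0) :=
    squeeze_zero_norm hx tendsto_one_div_add_atTop_nhds_zero_nat
  have hxlim : Filter.Tendsto (x ∘ φ) Filter.atTop (nhds y) := by
    have := hlim.sub (hdiff.comp hφ.tendsto_atTop)
    simpa [Function.comp_def] using this
  exact ⟨y, tendsto_nhds_unique ((hN.tendsto y).comp hxlim) hlim⟩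

end Schauder

/-- Schaefer fixed point theorem. -/
theorem stmt_11 {X : Type*} [NormedAddCommGroup X] [NormedSpace ℝ X] [CompleteSpace X]
    (M : X → X) (hMcont : Continuous M)
    (hMcompact : ∀ s : Set X, Bornology.IsBounded s → IsCompact (closure (M '' s)))
    (hbdd : ∃ C : ℝ, ∀ (x : X) (t : ℝ), t ∈ Set.Ioo (0:ℝ) 1 → x = t • M x → ‖x‖ ≤ C) :
    ∃ x : X, M x = x := by
  obtain ⟨C, hC⟩ := hbdd
  let R : ℝ := |C| + 1
  have hR : 0 < R := by positivity
  have hCR : C < R := by linarith [le_abs_self C, (rfl : R = |C| + 1)]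
  let ρ : X → X := fun x => (R / max R ‖x‖) • x
  have hm : ∀ x : X, 0 < max R ‖x‖ := fun x => lt_max_of_lt_left hR
  have hρc : Continuous ρ :=
    (continuous_const.div (by fun_prop) (fun x => (hm x).ne')).smul continuous_id
  have hρn : ∀ x, ‖ρ x‖ ≤ R := fun x => by
    simp only [ρ]
    rw [norm_smul, Real.norm_of_nonneg (div_nonneg hR.le (hm x).le), div_mul_eq_mul_div,
      div_le_iff₀ (hm x)]
    gcongr
    exact le_max_right _ _
  have hρid : ∀ x, ‖x‖ ≤ R → ρ x = x := fun x hx => by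
    simp only [ρ]
    rw [max_eq_left hx, div_self hR.ne', one_smul]
  obtain ⟨x, hx⟩ := schauder (fun x => ρ (M (ρ x))) (by fun_prop)
    (ρ '' closure (M '' closedBall 0 R))
    ((hMcompact _ isBounded_closedBall).image hρc)
    (fun x => mem_image_of_mem _ (subset_closure (mem_image_of_mem _ (by simpa using hρn x))))
  have hxR : ‖x‖ ≤ R := by rw [← hx]; exact hρn _
  simp only [hρid x hxR] at hx
  refine ⟨x, ?_⟩
  rcases le_or_gt ‖M x‖ R with h | h
  · rwa [hρid _ h] at hx
  · exfalso
    have hx2 : x = (R / ‖M x‖) • M x := by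
      conv_lhs => rw [← hx]
      simp only [ρ]
      rw [max_eq_right h.le]
    have hM0 : 0 < ‖M x‖ := hR.trans h
    have h1 := hC x (R / ‖M x‖) ⟨by positivity, (div_lt_one hM0).mpr h⟩ hx2
    have h2 : ‖x‖ = R := by
      rw [hx2, norm_smul, Real.norm_of_nonneg (by positivity), div_mul_cancel₀ _ hM0.ne']
    linarith
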